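/- Let Λ : [0, ∞) → [0, ∞) be a continuous nondecreasing function with Λ(0) = 0, and let N = (N_t)_{t≥0} be an inhomogeneous Poisson process with mean function Λ (i.e., N has independent increments, cadlag paths, N_0 = 0, and N_t − N_s is Poisson distributed with parameter Λ(t) − Λ(s) for s ≤ t). Set X_t = N_t − Λ(t). Then for every n ≥ 1 the process M^(n)_t = Γ_n(X_t, −Λ(t), −Λ(t), …, −Λ(t)) (the Kendall polynomial with first argument X_t and all remaining n−1 arguments equal to −Λ(t)) is a martingale with respect to the natural filtration of X. -/

import Mathlib

open MeasureTheory ProbabilityTheory Filter Topology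
open scoped NNReal

/-- The Kendall polynomials `Γ_n`, expressing moments in terms of cumulants:
`Γ_0 = 1` and `Γ_{n+1}(x_1,…,x_{n+1}) = Σ_{j=0}^n C(n,j) Γ_j(x_1,…,x_j) x_{n+1-j}`.
The argument function `x : ℕ → ℝ` encodes the variables `x_1, x_2, …`
(only the values `x 1, …, x n` are used by `kendall n x`). -/
noncomputable def kendall : ℕ → (ℕ → ℝ) → ℝ
  | 0, _ => 1
  | n + 1, x =>
      ∑ j ∈ (Finset.range (n + 1)).attach,
        (n.choose j.1 : ℝ) * kendall j.1 x * x (n + 1 - j.1)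
decreasing_by exact Finset.mem_range.mp j.2

/-- A function `f : ℝ≥0 → ℝ` is cadlag: right-continuous with left limits. -/
def IsCadlag (f : ℝ≥0 → ℝ) : Prop :=
  (∀ t : ℝ≥0, ContinuousWithinAt f (Set.Ici t) t) ∧
    ∀ t : ℝ≥0, 0 < t → ∃ l : ℝ, Tendsto f (𝓝[<] t) (𝓝 l)

/-!
By the recurrence, the exponential generating series of `Γ_n(x₁, …, x_n)` solves
`F' = F * ∑ x_{k+1} X^k / k!`, so it is `exp (∑_{k ≥ 1} x_k X^k / k!)` and `Γ` is of binomial type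
under addition of its arguments. In particular `P_n(x; κ) = Γ_n(x - κ₁, -κ₂, …, -κ_n)` is of
binomial type in the pair `(x, κ)`, and if `κ` are the cumulants of `D` then
`E[P_n(D; κ)] = ∑ C(n, k) Γ_k(κ) Γ_{n-k}(-κ) = Γ_n(0)`, which vanishes for `n ≥ 1`. Writing
`N_t = N_s + (N_t - N_s)` and conditioning on the past, only the term `P_n(N_s; κ_s)` survives.
All cumulants of the Poisson law with mean `r` are equal to `r`: the size-biasing identity
`E[N f(N)] = r E[f(N + 1)]` with `f(k) = k ^ n` gives the moments the Kendall recurrence.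
-/

open Finset.HasAntidiagonal in
lemma sum_antidiagonal_mul_zero_pow {R : Type*} [Semiring R] (f : ℕ × ℕ → R) (n : ℕ) :
    ∑ p ∈ antidiagonal n, f p * 0 ^ p.2 = f (n, 0) := by
  rw [Finset.sum_eq_single_of_mem (n, 0) (mem_antidiagonal.mpr (add_zero n))]
  · rw [pow_zero, mul_one]
  · rintro ⟨i, j⟩ hij hne
    have hj : j ≠ 0 := by
      rintro rfl
      exact hne (Prod.ext (mem_antidiagonal.mp hij) rfl)
    rw [zero_pow hj, mul_zero]

section ExponentialGeneratingSeries

open PowerSeries Finset.HasAntidiagonal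

variable {K : Type*} [Field K]

/-- The exponential generating series `∑ aₙ Xⁿ / n!` of a sequence, as a formal power series. It
turns binomial convolution into multiplication and the index shift into differentiation. -/
noncomputable def expGenSeries (a : ℕ → K) : K⟦X⟧ :=
  PowerSeries.mk fun n => a n / n.factorial

lemma coeff_expGenSeries (a : ℕ → K) (n : ℕ) :
    coeff n (expGenSeries a) = a n / n.factorial :=
  coeff_mk _ _

lemma expGenSeries_add (a b : ℕ → K) :
    expGenSeries (a + b) = expGenSeries a + expGenSeries b := by
  ext n
  simp only [map_add, coeff_expGenSeries, Pi.add_apply, add_div]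

variable [CharZero K]

lemma expGenSeries_injective : Function.Injective (expGenSeries (K := K)) := by
  intro a b hab
  ext n
  have hn : (n.factorial : K) ≠ 0 := mod_cast n.factorial_ne_zero
  simpa only [coeff_expGenSeries, div_left_inj' hn] using congrArg (coeff n) hab

lemma expGenSeries_mul (a b : ℕ → K) :
    expGenSeries a * expGenSeries b =
      expGenSeries fun n => ∑ p ∈ antidiagonal n, n.choose p.1 * (a p.1 * b p.2) := by
  ext n
  simp only [coeff_mul, coeff_expGenSeries, Finset.sum_div]
  refine Finset.sum_congr rfl fun p hp => ?_
  obtain rfl := mem_antidiagonal.mp hp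
  have hfac (k : ℕ) : (k.factorial : K) ≠ 0 := mod_cast k.factorial_ne_zero
  rw [Nat.cast_add_choose]
  field_simp [hfac]

lemma derivative_expGenSeries (a : ℕ → K) :
    derivative K (expGenSeries a) = expGenSeries fun n => a (n + 1) := by
  ext n
  have hn : (n + 1 : K) ≠ 0 := mod_cast n.succ_ne_zero
  rw [coeff_derivative, coeff_expGenSeries, coeff_expGenSeries, Nat.factorial_succ]
  push_cast
  field_simp

lemma eq_of_derivative_eq_mul {F G c : K⟦X⟧} (hF : derivative K F = F * c)
    (hG : derivative K G = G * c) (hF0 : constantCoeff F = 1) (hG0 : constantCoeff G = 1) :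
    F = G := by
  have hG_inv : G * G⁻¹ = 1 := PowerSeries.mul_inv_cancel G (by simp [hG0])
  have hquot : F * G⁻¹ = 1 := by
    refine derivative.ext ?_ (by simp [hF0, hG0])
    rw [derivative_one, Derivation.leibniz, derivative_inv', hF, hG]
    linear_combination (-F * G⁻¹ * c) * hG_inv
  linear_combination G * hquot - F * hG_inv

end ExponentialGeneratingSeries

section KendallPolynomials

open Finset.HasAntidiagonal

lemma kendall_zero (x : ℕ → ℝ) : kendall 0 x = 1 := by
  rw [kendall]

lemma kendall_succ (n : ℕ) (x : ℕ → ℝ) :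
    kendall (n + 1) x =
      ∑ p ∈ antidiagonal n, (n.choose p.1 : ℝ) * (kendall p.1 x * x (p.2 + 1)) := by
  rw [kendall, Finset.sum_attach (Finset.range (n + 1))
    (fun j => (n.choose j : ℝ) * kendall j x * x (n + 1 - j)),
    Finset.Nat.sum_antidiagonal_eq_sum_range_succ
      (fun i j => (n.choose i : ℝ) * (kendall i x * x (j + 1)))]
  refine Finset.sum_congr rfl fun j hj => ?_
  rw [Nat.sub_add_comm (Finset.mem_range_succ_iff.mp hj), mul_assoc]

lemma derivative_expGenSeries_kendall (x : ℕ → ℝ) :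
    PowerSeries.derivative ℝ (expGenSeries fun n => kendall n x) =
      (expGenSeries fun n => kendall n x) * expGenSeries fun n => x (n + 1) := by
  simp only [derivative_expGenSeries, expGenSeries_mul, kendall_succ]

lemma constantCoeff_expGenSeries_kendall (x : ℕ → ℝ) :
    PowerSeries.constantCoeff (expGenSeries fun n => kendall n x) = 1 := by
  rw [← PowerSeries.coeff_zero_eq_constantCoeff_apply, coeff_expGenSeries, kendall_zero]
  simp

lemma kendall_add (n : ℕ) (x y : ℕ → ℝ) :
    kendall n (x + y) =
      ∑ p ∈ antidiagonal n, (n.choose p.1 : ℝ) * (kendall p.1 x * kendall p.2 y) := by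
  suffices h : (expGenSeries fun n => kendall n (x + y)) =
      (expGenSeries fun n => kendall n x) * expGenSeries fun n => kendall n y from
    congrFun (expGenSeries_injective (h.trans (expGenSeries_mul _ _))) n
  refine eq_of_derivative_eq_mul (derivative_expGenSeries_kendall (x + y)) ?_
    (constantCoeff_expGenSeries_kendall _) (by simp [constantCoeff_expGenSeries_kendall])
  have hc : (expGenSeries fun n => (x + y) (n + 1)) =
      (expGenSeries fun n => x (n + 1)) + expGenSeries fun n => y (n + 1) :=
    expGenSeries_add _ _
  rw [Derivation.leibniz, derivative_expGenSeries_kendall, derivative_expGenSeries_kendall, hc]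
  simp only [smul_eq_mul]
  ring

lemma kendall_single_one (n : ℕ) (c : ℝ) : kendall n (Pi.single 1 c) = c ^ n := by
  induction n with
  | zero => rw [kendall_zero, pow_zero]
  | succ n ih =>
    have hsingle (k : ℕ) : (Pi.single 1 c : ℕ → ℝ) (k + 1) = c * 0 ^ k := by
      cases k <;> simp
    simp only [kendall_succ, hsingle, ← mul_assoc]
    rw [sum_antidiagonal_mul_zero_pow fun p =>
      (n.choose p.1 : ℝ) * kendall p.1 (Pi.single 1 c) * c]
    simp only [Nat.choose_self, Nat.cast_one, one_mul, ih, pow_succ]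

/-- The polynomial `P_n(x) = Γ_n(x - κ₁, -κ₂, …, -κ_n)` in `x`. For a fixed sequence `κ` these form
an Appell sequence, with generating series
`∑ P_n(x) Xⁿ / n! = exp (x X - ∑_{k ≥ 1} κ_k X^k / k!)`; the value `κ 0` is a dummy. -/
noncomputable def kendallAppell (n : ℕ) (κ : ℕ → ℝ) (x : ℝ) : ℝ :=
  kendall n (Pi.single 1 x - κ)

lemma kendall_ite_eq_kendallAppell (n : ℕ) (x l : ℝ) :
    (kendall n fun k => if k = 1 then x - l else -l) = kendallAppell n (fun _ => l) x := by
  congr 1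
  ext k
  simp only [Pi.sub_apply, Pi.single_apply]
  split_ifs <;> ring

lemma kendallAppell_add (n : ℕ) (κ κ' : ℕ → ℝ) (x y : ℝ) :
    kendallAppell n (κ + κ') (x + y) = ∑ p ∈ antidiagonal n,
      (n.choose p.1 : ℝ) * (kendallAppell p.1 κ x * kendallAppell p.2 κ' y) := by
  simp only [kendallAppell, Pi.single_add, add_sub_add_comm, kendall_add]

lemma kendallAppell_eq_sum (n : ℕ) (κ : ℕ → ℝ) (x : ℝ) :
    kendallAppell n κ x = ∑ p ∈ antidiagonal n,
      (n.choose p.1 : ℝ) * (x ^ p.1 * kendall p.2 (-κ)) := by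
  simp only [kendallAppell, sub_eq_add_neg, kendall_add, kendall_single_one]

lemma continuous_kendallAppell (n : ℕ) (κ : ℕ → ℝ) : Continuous (kendallAppell n κ) := by
  simp only [funext (kendallAppell_eq_sum n κ)]
  fun_prop

end KendallPolynomials

section Cumulants

open Finset.HasAntidiagonal

variable {Ω : Type*} {mΩ : MeasurableSpace Ω} {μ : Measure Ω} {X : Ω → ℝ} {κ : ℕ → ℝ} {n : ℕ}

/-- `X` has a finite `n`-th absolute moment and its moments up to order `n` are those of the
cumulants `κ 1, …, κ n`, expressed through the Kendall polynomials; the value `κ 0` is a dummy. -/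
structure HasCumulantsUpTo (X : Ω → ℝ) (κ : ℕ → ℝ) (n : ℕ) (μ : Measure Ω) : Prop where
  memLp : MemLp X n μ
  integral_pow : ∀ k ≤ n, ∫ ω, X ω ^ k ∂μ = kendall k κ

lemma HasCumulantsUpTo.mono [IsFiniteMeasure μ] {m : ℕ} (h : HasCumulantsUpTo X κ n μ)
    (hmn : m ≤ n) : HasCumulantsUpTo X κ m μ where
  memLp := h.memLp.mono_exponent (mod_cast hmn)
  integral_pow k hk := h.integral_pow k (hk.trans hmn)

lemma integrable_pow_of_memLp [IsFiniteMeasure μ] (hX : MemLp X n μ) {k : ℕ} (hk : k ≤ n) :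
    Integrable (fun ω => X ω ^ k) μ := by
  have hXk : MemLp X k μ := hX.mono_exponent (mod_cast hk)
  refine (integrable_norm_iff (hXk.aestronglyMeasurable.pow k)).mp ?_
  simpa only [Pi.pow_apply, norm_pow] using hXk.integrable_norm_pow'

lemma integrable_kendallAppell [IsFiniteMeasure μ] (hX : MemLp X n μ) (κ : ℕ → ℝ) :
    Integrable (fun ω => kendallAppell n κ (X ω)) μ := by
  simp only [kendallAppell_eq_sum]
  exact integrable_finsetSum _ fun p hp =>
    ((integrable_pow_of_memLp hX (antidiagonal.fst_le hp)).mul_const _).const_mul _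

lemma HasCumulantsUpTo.integral_kendallAppell [IsFiniteMeasure μ]
    (h : HasCumulantsUpTo X κ n μ) : ∫ ω, kendallAppell n κ (X ω) ∂μ = 0 ^ n := by
  have hint (p) (hp : p ∈ antidiagonal n) : Integrable
      (fun ω => (n.choose p.1 : ℝ) * (X ω ^ p.1 * kendall p.2 (-κ))) μ :=
    ((integrable_pow_of_memLp h.memLp (antidiagonal.fst_le hp)).mul_const _).const_mul _
  calc ∫ ω, kendallAppell n κ (X ω) ∂μ
      = ∑ p ∈ antidiagonal n,
          (n.choose p.1 : ℝ) * ((∫ ω, X ω ^ p.1 ∂μ) * kendall p.2 (-κ)) := by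
        simp only [kendallAppell_eq_sum, integral_finsetSum _ hint, integral_const_mul,
          integral_mul_const]
    _ = ∑ p ∈ antidiagonal n,
          (n.choose p.1 : ℝ) * (kendall p.1 κ * kendall p.2 (-κ)) :=
        Finset.sum_congr rfl fun p hp => by
          rw [h.integral_pow p.1 (antidiagonal.fst_le hp)]
    _ = kendall n (Pi.single 1 0) := by
        rw [← kendall_add, add_neg_cancel, Pi.single_zero]
    _ = 0 ^ n := kendall_single_one n 0

end Cumulants

section Martingale

open Finset.HasAntidiagonal

variable {Ω : Type*} {m mΩ : MeasurableSpace Ω} {μ : Measure Ω}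

lemma indepFun_of_indep_comap {β γ : Type*} [MeasurableSpace β] [MeasurableSpace γ]
    {f : Ω → β} {g : Ω → γ} (hf : Measurable[m] f)
    (hindep : Indep (MeasurableSpace.comap g inferInstance) m μ) : IndepFun f g μ :=
  (IndepFun_iff_Indep _ _ _).mpr (indep_of_indep_of_le_left hindep.symm hf.comap_le)

lemma condExp_mul_of_indep [IsFiniteMeasure μ] {f g : Ω → ℝ} (hm : m ≤ mΩ)
    (hf : StronglyMeasurable[m] f) (hf_int : Integrable f μ)
    (hg : Measurable g) (hg_int : Integrable g μ)
    (hindep : Indep (MeasurableSpace.comap g inferInstance) m μ) :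
    μ[f * g | m] =ᵐ[μ] fun ω => f ω * ∫ ω, g ω ∂μ := by
  have hfg_int : Integrable (f * g) μ :=
    (indepFun_of_indep_comap hf.measurable hindep).integrable_mul hf_int hg_int
  have hpull := condExp_mul_of_stronglyMeasurable_left hf hfg_int hg_int
  have hmean := condExp_indep_eq hg.comap_le hm (comap_measurable g).stronglyMeasurable hindep
  filter_upwards [hpull, hmean] with ω hpull hmean
  rw [hpull, Pi.mul_apply, hmean]

lemma condExp_sum_mul_of_indep [IsFiniteMeasure μ] {α : Type*} {A : Finset α} {f g : α → Ω → ℝ}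
    (hm : m ≤ mΩ) (hf : ∀ a ∈ A, StronglyMeasurable[m] (f a))
    (hf_int : ∀ a ∈ A, Integrable (f a) μ)
    (hg : ∀ a ∈ A, Measurable (g a)) (hg_int : ∀ a ∈ A, Integrable (g a) μ)
    (hindep : ∀ a ∈ A, Indep (MeasurableSpace.comap (g a) inferInstance) m μ) :
    μ[∑ a ∈ A, f a * g a | m] =ᵐ[μ] fun ω => ∑ a ∈ A, f a ω * ∫ ω, g a ω ∂μ := by
  have hfg_int (a) (ha : a ∈ A) : Integrable (f a * g a) μ :=
    (indepFun_of_indep_comap (hf a ha).measurable (hindep a ha)).integrable_mul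
      (hf_int a ha) (hg_int a ha)
  have hterm : ∀ᵐ ω ∂μ, ∀ a ∈ A, (μ[f a * g a | m]) ω = f a ω * ∫ ω, g a ω ∂μ :=
    (Finset.eventually_all A).mpr fun a ha =>
      condExp_mul_of_indep hm (hf a ha) (hf_int a ha) (hg a ha) (hg_int a ha) (hindep a ha)
  filter_upwards [condExp_finsetSum hfg_int m, hterm] with ω hsum hterm
  rw [hsum, Finset.sum_apply, Finset.sum_congr rfl hterm]

lemma condExp_kendallAppell_add [IsFiniteMeasure μ] {Y D : Ω → ℝ} {κ κ' : ℕ → ℝ} {n : ℕ}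
    (hm : m ≤ mΩ) (hY : StronglyMeasurable[m] Y) (hY_memLp : MemLp Y n μ) (hD : Measurable D)
    (hindep : Indep (MeasurableSpace.comap D inferInstance) m μ)
    (hD_cum : HasCumulantsUpTo D κ' n μ) :
    μ[fun ω => kendallAppell n (κ + κ') (Y ω + D ω) | m] =ᵐ[μ]
      fun ω => kendallAppell n κ (Y ω) := by
  let A (p : ℕ × ℕ) (ω : Ω) : ℝ := n.choose p.1 * kendallAppell p.1 κ (Y ω)
  let B (p : ℕ × ℕ) (ω : Ω) : ℝ := kendallAppell p.2 κ' (D ω)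
  have hdecomp : (fun ω => kendallAppell n (κ + κ') (Y ω + D ω)) =
      ∑ p ∈ antidiagonal n, A p * B p := by
    ext ω
    simp only [kendallAppell_add, Finset.sum_apply, Pi.mul_apply, A, B, mul_assoc]
  have hA_meas (p) : StronglyMeasurable[m] (A p) :=
    ((continuous_kendallAppell p.1 κ).comp_stronglyMeasurable hY).const_mul _
  have hA_int (p) (hp : p ∈ antidiagonal n) : Integrable (A p) μ :=
    (integrable_kendallAppell
      (hY_memLp.mono_exponent (mod_cast antidiagonal.fst_le hp)) κ).const_mul _
  have hB_meas (p) : Measurable[MeasurableSpace.comap D inferInstance] (B p) :=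
    (continuous_kendallAppell p.2 κ').measurable.comp (comap_measurable D)
  have hB_cum (p) (hp : p ∈ antidiagonal n) : HasCumulantsUpTo D κ' p.2 μ :=
    hD_cum.mono (antidiagonal.snd_le hp)
  have hcond : μ[∑ p ∈ antidiagonal n, A p * B p | m] =ᵐ[μ]
      fun ω => ∑ p ∈ antidiagonal n, A p ω * ∫ ω, B p ω ∂μ :=
    condExp_sum_mul_of_indep hm (fun p _ => hA_meas p) hA_int
      (fun p _ => (hB_meas p).mono hD.comap_le le_rfl)
      (fun p hp => integrable_kendallAppell (hB_cum p hp).memLp κ')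
      (fun p _ => indep_of_indep_of_le_left hindep (hB_meas p).comap_le)
  rw [hdecomp]
  refine hcond.trans (.of_forall fun ω => ?_)
  calc ∑ p ∈ antidiagonal n, A p ω * ∫ ω, B p ω ∂μ
      = ∑ p ∈ antidiagonal n, A p ω * 0 ^ p.2 :=
        Finset.sum_congr rfl fun p hp => by rw [(hB_cum p hp).integral_kendallAppell]
    _ = A (n, 0) ω := sum_antidiagonal_mul_zero_pow _ n
    _ = kendallAppell n κ (Y ω) := by simp only [A, Nat.choose_self, Nat.cast_one, one_mul]

theorem martingale_kendallAppell [IsFiniteMeasure μ] {ι : Type*} [Preorder ι]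
    {ℱ : Filtration ι mΩ} {X : ι → Ω → ℝ} {κ : ι → ℕ → ℝ} {n : ℕ}
    (hX : StronglyAdapted ℱ X) (hX_memLp : ∀ t, MemLp (X t) n μ)
    (hindep : ∀ s t, s ≤ t → Indep (MeasurableSpace.comap (X t - X s) inferInstance) (ℱ s) μ)
    (hcum : ∀ s t, s ≤ t → HasCumulantsUpTo (X t - X s) (κ t - κ s) n μ) :
    Martingale (fun t ω => kendallAppell n (κ t) (X t ω)) ℱ μ := by
  refine ⟨fun t => (continuous_kendallAppell n (κ t)).comp_stronglyMeasurable (hX t),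
    fun s t hst => ?_⟩
  have hincr : Measurable (X t - X s) :=
    (((hX t).mono (ℱ.le t)).sub ((hX s).mono (ℱ.le s))).measurable
  simpa only [Pi.sub_apply, add_sub_cancel] using
    condExp_kendallAppell_add (κ := κ s) (ℱ.le s) (hX s) (hX_memLp s) hincr (hindep s t hst)
      (hcum s t hst)

end Martingale

section Poisson

open Finset.HasAntidiagonal

variable {r : ℝ≥0}

lemma poisson_weight_succ (r : ℝ) (k : ℕ) :
    Real.exp (-r) * r ^ (k + 1) / (k + 1).factorial * (k + 1 : ℕ) =
      r * (Real.exp (-r) * r ^ k / k.factorial) := by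
  rw [Nat.factorial_succ, pow_succ']
  push_cast
  field_simp

lemma integrable_natCast_mul_poissonMeasure {f : ℕ → ℝ}
    (hf : Integrable (fun k => f (k + 1)) (poissonMeasure r)) :
    Integrable (fun k : ℕ => k * f k) (poissonMeasure r) := by
  rw [integrable_poissonMeasure_iff] at hf ⊢
  rw [← summable_nat_add_iff 1]
  simpa only [norm_mul, RCLike.norm_natCast, ← mul_assoc, poisson_weight_succ] using
    hf.mul_left (r : ℝ)

lemma integral_natCast_mul_poissonMeasure {f : ℕ → ℝ}
    (hf : Integrable (fun k => f (k + 1)) (poissonMeasure r)) :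
    ∫ k : ℕ, k * f k ∂(poissonMeasure r) = r * ∫ k, f (k + 1) ∂(poissonMeasure r) := by
  have hsum := hasSum_integral_poissonMeasure (integrable_natCast_mul_poissonMeasure hf)
  have hshift := (hasSum_integral_poissonMeasure hf).mul_left (r : ℝ)
  rw [← hasSum_nat_add_iff' 1] at hsum
  simp only [smul_eq_mul, ← mul_assoc, poisson_weight_succ] at hsum hshift
  simpa using hsum.unique hshift

lemma integrable_pow_poissonMeasure (r : ℝ≥0) (n : ℕ) :
    Integrable (fun k : ℕ => (k : ℝ) ^ n) (poissonMeasure r) := by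
  induction n using Nat.strong_induction_on with
  | _ n ih =>
    cases n with
    | zero => simp only [pow_zero, integrable_const]
    | succ n =>
      simp only [pow_succ']
      refine integrable_natCast_mul_poissonMeasure (f := fun k => (k : ℝ) ^ n) ?_
      simp only [Nat.cast_add, Nat.cast_one, add_pow]
      exact integrable_finsetSum _ fun j hj =>
        ((ih j (Finset.mem_range.mp hj)).mul_const _).mul_const _

lemma integral_pow_poissonMeasure (r : ℝ≥0) (n : ℕ) :
    ∫ k : ℕ, (k : ℝ) ^ n ∂(poissonMeasure r) = kendall n fun _ => (r : ℝ) := by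
  induction n using Nat.strong_induction_on with
  | _ n ih =>
    cases n with
    | zero => simp [kendall_zero]
    | succ n =>
      have hbinom (k : ℕ) : ((k + 1 : ℕ) : ℝ) ^ n =
          ∑ p ∈ antidiagonal n, (n.choose p.1 : ℝ) * (k : ℝ) ^ p.1 := by
        rw [Nat.cast_succ, (Commute.one_right (k : ℝ)).add_pow']
        simp only [one_pow, mul_one, nsmul_eq_mul]
      have hint (p : ℕ × ℕ) :
          Integrable (fun k : ℕ => (n.choose p.1 : ℝ) * (k : ℝ) ^ p.1) (poissonMeasure r) :=
        (integrable_pow_poissonMeasure r p.1).const_mul _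
      calc ∫ k : ℕ, (k : ℝ) ^ (n + 1) ∂(poissonMeasure r)
          = r * ∫ k : ℕ, ((k + 1 : ℕ) : ℝ) ^ n ∂(poissonMeasure r) := by
            simp only [pow_succ']
            refine integral_natCast_mul_poissonMeasure (f := fun k => (k : ℝ) ^ n) ?_
            simp only [hbinom]
            exact integrable_finsetSum _ fun p _ => hint p
        _ = r * ∑ p ∈ antidiagonal n,
              (n.choose p.1 : ℝ) * ∫ k : ℕ, (k : ℝ) ^ p.1 ∂(poissonMeasure r) := by
            simp only [hbinom, integral_finsetSum _ fun p _ => hint p, integral_const_mul]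
        _ = kendall (n + 1) fun _ => (r : ℝ) := by
            rw [kendall_succ, Finset.mul_sum]
            refine Finset.sum_congr rfl fun p hp => ?_
            rw [ih p.1 (Nat.lt_succ_of_le (antidiagonal.fst_le hp))]
            ring

lemma memLp_natCast_poissonMeasure (r : ℝ≥0) (n : ℕ) :
    MemLp (Nat.cast : ℕ → ℝ) n (poissonMeasure r) := by
  have hcast : AEStronglyMeasurable (Nat.cast : ℕ → ℝ) (poissonMeasure r) := .of_discrete
  rcases eq_or_ne n 0 with rfl | hn
  · simpa only [Nat.cast_zero, memLp_zero_iff_aestronglyMeasurable] using hcast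
  · rw [← integrable_norm_rpow_iff hcast (mod_cast hn) (ENNReal.natCast_ne_top n)]
    simpa only [ENNReal.toReal_natCast, Real.rpow_natCast, RCLike.norm_natCast] using
      integrable_pow_poissonMeasure r n

lemma hasCumulantsUpTo_of_hasLaw_poisson {Ω : Type*} {mΩ : MeasurableSpace Ω} {μ : Measure Ω}
    {X : Ω → ℝ} (hX : HasLaw X ((poissonMeasure r).map Nat.cast) μ) (n : ℕ) :
    HasCumulantsUpTo X (fun _ => (r : ℝ)) n μ where
  memLp := by
    have hid : MemLp id n (μ.map X) := by
      rw [hX.map_eq]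
      exact (memLp_map_measure_iff aestronglyMeasurable_id .of_discrete).mpr
        (memLp_natCast_poissonMeasure r n)
    exact hid.comp_of_map hX.aemeasurable
  integral_pow k _ := by
    calc ∫ ω, X ω ^ k ∂μ = ∫ x, x ^ k ∂((poissonMeasure r).map (Nat.cast : ℕ → ℝ)) :=
          hX.integral_comp (f := fun x => x ^ k) (by fun_prop)
      _ = ∫ j : ℕ, (j : ℝ) ^ k ∂(poissonMeasure r) :=
          integral_map .of_discrete (by fun_prop)
      _ = kendall k fun _ => (r : ℝ) := integral_pow_poissonMeasure r k

lemma hasLaw_intCast_poisson (r : ℝ≥0) :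
    HasLaw (Int.cast : ℤ → ℝ) ((poissonMeasure r).map Nat.cast)
      ((poissonMeasure r).map Nat.cast) where
  aemeasurable := .of_discrete
  map_eq := by
    rw [Measure.map_map .of_discrete .of_discrete]
    congr 1

end Poisson

theorem compensatedPoisson_kendall_martingale_general
    {Ω : Type*} {mΩ : MeasurableSpace Ω} {μ : Measure Ω} [IsProbabilityMeasure μ]
    {ι : Type*} [Preorder ι] [OrderBot ι] {ℱ : Filtration ι mΩ} {Λ : ι → ℝ≥0} {N : ι → Ω → ℕ}
    {n : ℕ} (hΛ : Monotone Λ) (hN_bot : MemLp (fun ω => (N ⊥ ω : ℝ)) n μ)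
    (hX : StronglyAdapted ℱ fun t ω => (N t ω : ℝ) - (Λ t : ℝ))
    (hindep : ∀ s t, s ≤ t →
      Indep (MeasurableSpace.comap (fun ω => (N t ω : ℤ) - (N s ω : ℤ)) inferInstance) (ℱ s) μ)
    (hpois : ∀ s t, s ≤ t →
      μ.map (fun ω => (N t ω : ℤ) - (N s ω : ℤ)) = (poissonMeasure (Λ t - Λ s)).map Nat.cast) :
    Martingale
      (fun t ω => kendall n fun k => if k = 1 then (N t ω : ℝ) - (Λ t : ℝ) else -(Λ t : ℝ))
      ℱ μ := by
  have hN : StronglyAdapted ℱ fun t ω => (N t ω : ℝ) := fun t => by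
    simpa only [sub_add_cancel] using (hX t).add_const (Λ t : ℝ)
  have hincr (s t : ι) : (fun ω => (N t ω : ℝ)) - (fun ω => (N s ω : ℝ)) =
      Int.cast ∘ fun ω => (N t ω : ℤ) - (N s ω : ℤ) := by
    ext ω
    simp only [Pi.sub_apply, Function.comp_apply, Int.cast_sub, Int.cast_natCast]
  have hcum (s t : ι) (hst : s ≤ t) : HasCumulantsUpTo
      ((fun ω => (N t ω : ℝ)) - fun ω => (N s ω : ℝ))
      (fun _ => (Λ t : ℝ) - (Λ s : ℝ)) n μ := by
    have hlaw : HasLaw (fun ω => (N t ω : ℤ) - (N s ω : ℤ))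
        ((poissonMeasure (Λ t - Λ s)).map Nat.cast) μ :=
      ⟨aemeasurable_of_map_neZero (by rw [hpois s t hst]; infer_instance), hpois s t hst⟩
    rw [hincr]
    simpa only [NNReal.coe_sub (hΛ hst)] using
      hasCumulantsUpTo_of_hasLaw_poisson ((hasLaw_intCast_poisson _).comp hlaw) n
  have hN_memLp (t : ι) : MemLp (fun ω => (N t ω : ℝ)) n μ := by
    simpa only [add_sub_cancel] using hN_bot.add (hcum ⊥ t bot_le).memLp
  simp only [kendall_ite_eq_kendallAppell]
  refine martingale_kendallAppell (κ := fun t _ => (Λ t : ℝ)) hN hN_memLp (fun s t hst => ?_) hcum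
  rw [hincr, ← MeasurableSpace.comap_comp]
  exact indep_of_indep_of_le_left (hindep s t hst)
    (MeasurableSpace.comap_mono (Measurable.of_discrete.comap_le))

/-- For a compensated inhomogeneous Poisson process `X_t = N_t - Λ(t)`, where `N` is an
inhomogeneous Poisson process with continuous nondecreasing mean function `Λ` (`Λ(0) = 0`),
the process `M^{(n)}_t = Γ_n(X_t, -Λ(t), …, -Λ(t))` is a martingale with respect to the
natural filtration, for every `n ≥ 1`. -/
theorem compensatedPoisson_kendall_martingale
    {Ω : Type*} {mΩ : MeasurableSpace Ω} (μ : Measure Ω) [IsProbabilityMeasure μ]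
    (Λ : ℝ≥0 → ℝ≥0) (hΛcont : Continuous Λ) (hΛmono : Monotone Λ) (hΛ0 : Λ 0 = 0)
    (N : ℝ≥0 → Ω → ℕ) (hN : ∀ t, Measurable (N t)) (hN0 : ∀ ω, N 0 ω = 0)
    (hcadlag : ∀ ω, IsCadlag fun t => (N t ω : ℝ))
    (hXmeas : ∀ t : ℝ≥0, StronglyMeasurable fun ω => (N t ω : ℝ) - (Λ t : ℝ))
    (hindep : ∀ s t : ℝ≥0, s ≤ t →
      Indep (MeasurableSpace.comap (fun ω => (N t ω : ℤ) - (N s ω : ℤ))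
          (inferInstance : MeasurableSpace ℤ))
        (MeasureTheory.Filtration.natural (fun t ω => (N t ω : ℝ) - (Λ t : ℝ)) hXmeas s) μ)
    (hpois : ∀ s t : ℝ≥0, s ≤ t →
      Measure.map (fun ω => (N t ω : ℤ) - (N s ω : ℤ)) μ =
        (poissonMeasure (Λ t - Λ s)).map (fun k : ℕ => (k : ℤ)))
    (n : ℕ) (hn : 1 ≤ n) :
    Martingale
      (fun t ω => kendall n fun k =>
        if k = 1 then (N t ω : ℝ) - (Λ t : ℝ) else -(Λ t : ℝ))
      (MeasureTheory.Filtration.natural (fun t ω => (N t ω : ℝ) - (Λ t : ℝ)) hXmeas) μ :=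
  compensatedPoisson_kendall_martingale_general hΛmono (by simp [hN0])
    (Filtration.stronglyAdapted_natural hXmeas) hindep hpois
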